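/- arXiv:1508.06015 — 3 statements merged into one kernel-verified Lean document; each statement's English description precedes it below -/
import Mathlib

section
/- Let R be a d-dimensional normal local domain (residue field possibly finite) and I a normal M-primary ideal. For every r ≥ 1 there exist s ≥ 1 and elements x₁,…,x_d ∈ I^{rs} such that for every t ≥ 1 the ideal (x₁ᵗ,…,x_dᵗ)R is a reduction of I^{rst}. -/
def Ideal.IsIntegrallyClosedIdeal {R : Type*} [CommRing R] (J : Ideal R) : Prop :=
  ∀ r : R,
    (∃ n : ℕ, 0 < n ∧ ∃ a : ℕ → R,
        (∀ i, 1 ≤ i → i ≤ n → a i ∈ J ^ i) ∧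
        r ^ n + ∑ i ∈ Finset.Icc 1 n, a i * r ^ (n - i) = 0) →
    r ∈ J

def Ideal.IsNormalIdeal {R : Type*} [CommRing R] (J : Ideal R) : Prop :=
  ∀ n : ℕ, 1 ≤ n → (J ^ n).IsIntegrallyClosedIdeal

/-- `J` is a reduction of `I` if `J ≤ I` and `I^{n+1} = J·Iⁿ` for some `n`. -/
def Ideal.IsReductionOf {R : Type*} [CommRing R] (J I : Ideal R) : Prop :=
  J ≤ I ∧ ∃ n : ℕ, I ^ (n + 1) = J * I ^ n

namespace ReductionAux

open MvPolynomial

attribute [local instance] MvPolynomial.gradedAlgebra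

section general
variable {σ R : Type*} [CommRing R]

/-- Closed under homogeneous components. -/
def Hom (Q : Ideal (MvPolynomial σ R)) : Prop :=
  ∀ p ∈ Q, ∀ n, homogeneousComponent n p ∈ Q

theorem hom_iff (Q : Ideal (MvPolynomial σ R)) :
    Hom Q ↔ Q.IsHomogeneous (homogeneousSubmodule σ R) := by
  constructor
  · intro h n p hp
    have := h p hp n
    rw [← decomposition.decompose'_apply] at this
    exact this
  · intro h p hp n
    exact homogeneousComponent_mem_of_mem h hp n

theorem Hom.sup {P Q : Ideal (MvPolynomial σ R)} (hP : Hom P) (hQ : Hom Q) : Hom (P ⊔ Q) := by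
  rw [hom_iff] at *
  exact Ideal.IsHomogeneous.sup hP hQ

theorem Hom.span {s : Set (MvPolynomial σ R)} (h : ∀ p ∈ s, ∃ n, p.IsHomogeneous n) :
    Hom (Ideal.span s) := by
  rw [hom_iff]
  exact Ideal.homogeneous_span _ _ h

theorem Hom.minimalPrime {P Q : Ideal (MvPolynomial σ R)} (hP : Hom P)
    (hQ : Q ∈ P.minimalPrimes) : Hom Q := by
  rw [hom_iff] at *
  have h1 : (Q.homogeneousCore (homogeneousSubmodule σ R)).toIdeal.IsPrime :=
    Ideal.IsPrime.homogeneousCore hQ.1.1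
  have h2 : P ≤ (Q.homogeneousCore (homogeneousSubmodule σ R)).toIdeal :=
    hP.toIdeal_homogeneousCore_eq_self.symm.trans_le (Ideal.homogeneousCore_mono _ hQ.1.2)
  have h3 := hQ.2 ⟨h1, h2⟩ (Ideal.toIdeal_homogeneousCore_le _ Q)
  rw [Ideal.IsHomogeneous.iff_eq]
  exact le_antisymm (Ideal.toIdeal_homogeneousCore_le _ Q) h3

theorem exists_homog_mem_notMem {P Q : Ideal (MvPolynomial σ R)} (hP : Hom P) (h : ¬ P ≤ Q) :
    ∃ n, ∃ p : MvPolynomial σ R, p.IsHomogeneous n ∧ p ∈ P ∧ p ∉ Q := by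
  by_contra! hc
  apply h
  intro p hp
  rw [← sum_homogeneousComponent p]
  exact Ideal.sum_mem _ fun i _ => hc i _ (homogeneousComponent_isHomogeneous i p) (hP p hp i)

/-- homogeneous prime avoidance -/
theorem avoid (T : Finset (Ideal (MvPolynomial σ R)))
    (hprime : ∀ P ∈ T, P.IsPrime) (hhom : ∀ P ∈ T, Hom P)
    (hanti : ∀ P ∈ T, ∀ Q ∈ T, P ≤ Q → P = Q)
    (hX : ∀ P ∈ T, ∃ i, X i ∉ P) :
    ∃ m, 0 < m ∧ ∃ f : MvPolynomial σ R, f.IsHomogeneous m ∧ ∀ P ∈ T, f ∉ P := by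
  classical
  induction T using Finset.induction_on with
  | empty => exact ⟨1, one_pos, 0, isHomogeneous_zero _ _ _, by simp⟩
  | insert Q T hQT ih =>
    obtain ⟨m, hm, g, hg, hgT⟩ := ih (fun P h => hprime P (by simp [h]))
      (fun P h => hhom P (by simp [h]))
      (fun P h P' h' => hanti P (by simp [h]) P' (by simp [h'])) (fun P h => hX P (by simp [h]))
    by_cases hgQ : g ∈ Q
    · have hQp : Q.IsPrime := hprime Q (by simp)
      have h1 : ∀ P : Ideal (MvPolynomial σ R), ∃ n, ∃ p : MvPolynomial σ R,
          P ∈ T → (p.IsHomogeneous n ∧ p ∈ P ∧ p ∉ Q) := by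
        intro P
        by_cases hPT : P ∈ T
        · obtain ⟨n, p, hp⟩ := exists_homog_mem_notMem (Q := Q) (hhom P (by simp [hPT]))
            (fun hle => hQT (by
              rw [← hanti P (by simp [hPT]) Q (by simp) hle]; exact hPT))
          exact ⟨n, p, fun _ => hp⟩
        · exact ⟨0, 0, fun h => absurd h hPT⟩
      choose n p hp using h1
      obtain ⟨i, hi⟩ := hX Q (by simp)
      set h := X i * ∏ P ∈ T, p P with hh
      have hhh : h.IsHomogeneous (1 + ∑ P ∈ T, n P) :=
        (isHomogeneous_X R i).mul (IsHomogeneous.prod T p n fun P hP => (hp P hP).1)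
      have hhQ : h ∉ Q := by
        intro hc
        rcases hQp.mem_or_mem hc with hc | hc
        · exact hi hc
        · obtain ⟨P, hP, hc⟩ := (hQp.prod_mem_iff).1 hc
          exact (hp P hP).2.2 hc
      set N := 1 + ∑ P ∈ T, n P with hN
      refine ⟨m * N, by positivity, g ^ N + h ^ m, (hg.pow N).add ?_, ?_⟩
      · rw [mul_comm]; exact hhh.pow m
      · intro P hP hc
        rcases Finset.mem_insert.1 hP with rfl | hPT
        · have : h ^ m ∈ P := (Ideal.add_mem_iff_right _
            (Ideal.pow_mem_of_mem _ hgQ _ (by positivity))).1 hc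
          exact hhQ (hQp.mem_of_pow_mem _ this)
        · have hPp := hprime P hP
          have hhP : h ∈ P := Ideal.mul_mem_left _ _
            (Ideal.mem_of_dvd _ (Finset.dvd_prod_of_mem p hPT) (hp P hPT).2.1)
          have : g ^ N ∈ P := (Ideal.add_mem_iff_left _
            (Ideal.pow_mem_of_mem _ hhP _ hm)).1 hc
          exact hgT P hPT (hPp.mem_of_pow_mem _ this)
    · refine ⟨m, hm, g, hg, ?_⟩
      intro P hP
      rcases Finset.mem_insert.1 hP with rfl | hPT
      · exact hgQ
      · exact hgT P hPT

/-- Iterated choice of parameters. -/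
theorem params [IsNoetherianRing (MvPolynomial σ R)] (J : Ideal (MvPolynomial σ R)) (hJ : Hom J)
    (n : ℕ)
    (hn : ∀ Q : Ideal (MvPolynomial σ R), Q.IsPrime → J ≤ Q → (n : ℕ∞) ≤ Q.height) (k : ℕ) :
    ∃ f : Fin k → MvPolynomial σ R, ∃ m : Fin k → ℕ, (∀ j, 0 < m j ∧ (f j).IsHomogeneous (m j)) ∧
      ∀ Q : Ideal (MvPolynomial σ R), Q.IsPrime → J ⊔ Ideal.span (Set.range f) ≤ Q →
        (∃ i, X i ∉ Q) → ((n + k : ℕ) : ℕ∞) ≤ Q.height := by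
  classical
  induction k with
  | zero =>
    refine ⟨Fin.elim0, Fin.elim0, fun j => j.elim0, fun Q hQ hle _ => ?_⟩
    exact hn Q hQ (le_sup_left.trans hle)
  | succ k ih =>
    obtain ⟨f, m, hfm, hf⟩ := ih
    set J' := J ⊔ Ideal.span (Set.range f) with hJ'
    have hJ'h : Hom J' := hJ.sup (Hom.span (by rintro _ ⟨j, rfl⟩; exact ⟨_, (hfm j).2⟩))
    have hfin := J'.finite_minimalPrimes_of_isNoetherianRing
    obtain ⟨e, he, g, hg, hgT⟩ := avoid (hfin.toFinset.filter fun P => ∃ i, X i ∉ P)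
      (fun P hP => by
        simp only [Finset.mem_filter, Set.Finite.mem_toFinset] at hP; exact hP.1.1.1)
      (fun P hP => by
        simp only [Finset.mem_filter, Set.Finite.mem_toFinset] at hP
        exact hJ'h.minimalPrime hP.1)
      (fun P hP Q hQ hPQ => by
        simp only [Finset.mem_filter, Set.Finite.mem_toFinset] at hP hQ
        exact le_antisymm hPQ (hQ.1.2 hP.1.1 hPQ))
      (fun P hP => by
        simp only [Finset.mem_filter, Set.Finite.mem_toFinset] at hP; exact hP.2)
    refine ⟨Fin.snoc f g, Fin.snoc m e, ?_, ?_⟩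
    · intro j
      refine Fin.lastCases ?_ (fun j => ?_) j
      · simpa using ⟨he, hg⟩
      · simpa using hfm j
    · intro Q hQ hle hXQ
      have hle' : J' ≤ Q := by
        refine le_trans (sup_le_sup_left (Ideal.span_mono ?_) _) hle
        rintro _ ⟨j, rfl⟩
        exact ⟨j.castSucc, by simp⟩
      have hgQ : g ∈ Q := hle (Ideal.mem_sup_right
        (Ideal.subset_span ⟨Fin.last k, by simp⟩))
      obtain ⟨P, hP, hPQ⟩ := Ideal.exists_minimalPrimes_le hle'
      have hXP : ∃ i, X i ∉ P := hXQ.imp fun i hi h => hi (hPQ h)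
      have hgP : g ∉ P := hgT P (by simp [hP, hXP])
      have hlt : P < Q := lt_of_le_of_ne hPQ (fun h => hgP (h ▸ hgQ))
      have : P.IsPrime := hP.1.1
      have h1 := hf P this hP.1.2 hXP
      have h2 := Ideal.height_add_one_le_of_lt_of_isPrime hlt
      refine le_trans ?_ h2
      have h3 : ((n + (k + 1) : ℕ) : ℕ∞) = ((n + k : ℕ) : ℕ∞) + 1 := by push_cast; ring
      rw [h3]
      gcongr

end general

section rees
variable {R : Type*} [CommRing R] {n : ℕ}

/-- partial substitution -/
noncomputable def psi (a : Fin (n + 1) → R) (k : ℕ) :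
    MvPolynomial (Fin (n + 1)) R →ₐ[R] MvPolynomial (Fin (n + 1)) R :=
  aeval fun i => if i.1 ≤ k then C (a i) * X 0 else X i

theorem psi_height [IsDomain R] (a : Fin (n + 1) → R) (ha : a 0 ≠ 0) (k : ℕ) (hk : k ≤ n) :
    (k : ℕ∞) ≤ (RingHom.ker (psi a k)).height := by
  induction k with
  | zero => simp
  | succ k ih =>
    have ih := ih (by omega)
    have : (RingHom.ker (psi a k)).IsPrime := RingHom.ker_isPrime _
    have : (RingHom.ker (psi a (k + 1))).IsPrime := RingHom.ker_isPrime _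
    set κ : Fin (n + 1) := ⟨k + 1, by omega⟩ with hκ
    have hκ0 : κ ≠ 0 := by simp [hκ, Fin.ext_iff]
    have hlt : RingHom.ker (psi a k) < RingHom.ker (psi a (k + 1)) := by
      refine lt_of_le_of_ne ?_ ?_
      · have hc : psi a (k + 1) = (aeval fun i => if i = κ then C (a κ) * X 0 else X i :
          MvPolynomial (Fin (n + 1)) R →ₐ[R] MvPolynomial (Fin (n + 1)) R).comp (psi a k) := by
          apply MvPolynomial.algHom_ext
          intro i
          simp only [psi, AlgHom.comp_apply, aeval_X]
          by_cases h1 : i.1 ≤ k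
          · simp [h1, Nat.le_succ_of_le h1, hκ0.symm, algebraMap_eq]
          · by_cases h2 : i = κ
            · subst h2
              simp [hκ]
            · have : ¬ i.1 ≤ k + 1 := by
                intro h; apply h2; ext; simp [hκ]; omega
              simp [h1, this, h2]
        intro p hp
        rw [RingHom.mem_ker] at hp ⊢
        rw [hc, AlgHom.comp_apply, hp, map_zero]
      · intro heq
        have h1 : C (a 0) * X κ - C (a κ) * X 0 ∈ RingHom.ker (psi a (k + 1)) := by
          rw [RingHom.mem_ker]
          simp [psi, hκ, algebraMap_eq]
          ring
        rw [← heq, RingHom.mem_ker] at h1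
        simp only [psi, map_sub, map_mul, aeval_X, algHom_C, algebraMap_eq] at h1
        have h2 := congrArg (coeff (Finsupp.single κ 1)) h1
        have hne : Finsupp.single (0 : Fin (n+1)) 1 ≠ Finsupp.single κ 1 := by
          intro h
          exact hκ0 (Finsupp.single_left_injective one_ne_zero h).symm
        simp [hκ, coeff_C_mul, coeff_X] at h2
        simp [← hκ, hne, ha] at h2
    have h2 := Ideal.height_add_one_le_of_lt_of_isPrime hlt
    refine le_trans ?_ h2
    push_cast
    gcongr

theorem psi_homog (a : Fin (n + 1) → R) {p : MvPolynomial (Fin (n + 1)) R} {e : ℕ}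
    (hp : p.IsHomogeneous e) : psi a n p = C (eval a p) * X 0 ^ e := by
  have h : (fun i : Fin (n + 1) => if i.1 ≤ n then C (a i) * X 0 else X i) =
      fun i => (C (a i) * X 0 : MvPolynomial (Fin (n + 1)) R) := by
    funext i
    have : i.1 ≤ n := by omega
    simp [this]
  rw [psi, h, aeval_def, eval₂_eq, eval_eq, map_sum, Finset.sum_mul]
  refine Finset.sum_congr rfl fun d hd => ?_
  have hde := hp.degree_eq_sum_deg_support hd
  simp only [mul_pow, Finset.prod_mul_distrib, algebraMap_eq, map_mul, map_prod, map_pow]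
  rw [Finset.prod_pow_eq_pow_sum, mul_assoc]
  congr 3
  try exact hde.symm

theorem psi_comp (a : Fin (n + 1) → R) (p : MvPolynomial (Fin (n + 1)) R) (e : ℕ) :
    psi a n (homogeneousComponent e p) = homogeneousComponent e (psi a n p) := by
  have h : ∀ i, (psi a n (homogeneousComponent i p)).IsHomogeneous i := by
    intro i
    rw [psi_homog a (homogeneousComponent_isHomogeneous i p)]
    exact isHomogeneous_C_mul_X_pow _ _ _
  conv_rhs => rw [← sum_homogeneousComponent p]
  rw [map_sum, map_sum]
  simp_rw [fun i => homogeneousComponent_of_mem (m := e) (h i)]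
  rw [Finset.sum_ite_eq]
  split_ifs with hm
  · rfl
  · rw [homogeneousComponent_eq_zero, map_zero]
    simpa using hm

theorem psi_hom (a : Fin (n + 1) → R) : Hom (RingHom.ker (psi a n)) := by
  intro p hp e
  rw [RingHom.mem_ker] at hp ⊢
  rw [psi_comp, hp, map_zero]

theorem eval_comp_of_mem_ker (a : Fin (n + 1) → R) {p : MvPolynomial (Fin (n + 1)) R}
    (hp : p ∈ RingHom.ker (psi a n)) (e : ℕ) : eval a (homogeneousComponent e p) = 0 := by
  have h := psi_hom a p hp e
  rw [RingHom.mem_ker, psi_homog a (homogeneousComponent_isHomogeneous e p)] at h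
  have h2 := congrArg (eval fun _ => (1 : R)) h
  simpa using h2

theorem homogeneousComponent_mul_left {σ : Type*} {f : MvPolynomial σ R} {s : ℕ}
    (hf : f.IsHomogeneous s) (g : MvPolynomial σ R) (e : ℕ) :
    homogeneousComponent (s + e) (f * g) = f * homogeneousComponent e g := by
  have := DirectSum.coe_decompose_mul_add_of_left_mem (homogeneousSubmodule σ R)
    (i := s) (j := e) (a := f) (b := g) hf
  rw [← decomposition.decompose'_apply, ← decomposition.decompose'_apply]
  exact this

theorem mem_span_X_pow {σ : Type*} {p : MvPolynomial σ R} {e : ℕ} (hp : p.IsHomogeneous e) :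
    p ∈ Ideal.span (Set.range (X : σ → MvPolynomial σ R)) ^ e := by
  rw [Ideal.mem_span_pow_iff_exists_isHomogeneous]
  refine ⟨map C p, hp.map C, ?_⟩
  rw [eval_map, eval₂_eta]

theorem final [IsNoetherianRing R] [IsLocalRing R] (a : Fin (n + 1) → R) {d : ℕ}
    (f : Fin d → MvPolynomial (Fin (n + 1)) R) (s : ℕ) (hs : 0 < s)
    (hf : ∀ j, (f j).IsHomogeneous s)
    (hX : ∀ i, X i ∈ (Ideal.map C (IsLocalRing.maximalIdeal R) ⊔ RingHom.ker (psi a n) ⊔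
      Ideal.span (Set.range f)).radical) :
    (Ideal.span (Set.range fun j => eval a (f j))).IsReductionOf
      (Ideal.span (Set.range a) ^ s) := by
  set I := Ideal.span (Set.range a) with hI
  set M := IsLocalRing.maximalIdeal R with hM
  set J := Ideal.span (Set.range fun j => eval a (f j)) with hJ
  have hev : ∀ {p : MvPolynomial (Fin (n + 1)) R} {e : ℕ}, p.IsHomogeneous e →
      eval a p ∈ I ^ e := fun {p e} hp =>
    (Ideal.mem_span_pow_iff_exists_isHomogeneous a _).2 ⟨p, hp, rfl⟩
  have hJI : J ≤ I ^ s := by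
    rw [hJ, Ideal.span_le]
    rintro _ ⟨j, rfl⟩
    exact hev (hf j)
  refine ⟨hJI, ?_⟩
  obtain ⟨e, he⟩ := Ideal.exists_pow_le_of_le_radical_of_fg
    (I := Ideal.span (Set.range (X : Fin (n + 1) → MvPolynomial (Fin (n + 1)) R)))
    (by rw [Ideal.span_le]; rintro _ ⟨i, rfl⟩; exact hX i) (IsNoetherian.noetherian _)
  refine ⟨e, le_antisymm ?_ (by rw [pow_succ']; exact Ideal.mul_mono_left hJI)⟩
  rw [← pow_mul, ← pow_mul]
  refine Submodule.le_of_le_smul_of_le_jacobson_bot (I := M) (IsNoetherian.noetherian _)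
    (IsLocalRing.jacobson_eq_maximalIdeal _ bot_ne_top).ge ?_
  intro y hy
  obtain ⟨p, hp, rfl⟩ := (Ideal.mem_span_pow_iff_exists_isHomogeneous a _).1 hy
  have hle : e ≤ s * (e + 1) := by nlinarith
  have hpJ := he (Ideal.pow_le_pow_right hle (mem_span_X_pow hp))
  obtain ⟨q, hq, q3, hq3, hsum⟩ := Submodule.mem_sup.1 hpJ
  obtain ⟨q1, hq1, q2, hq2, rfl⟩ := Submodule.mem_sup.1 hq
  have e1 : homogeneousComponent (s * (e + 1)) p = p := homogeneousComponent_eq_self hp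
  rw [← e1, ← hsum, map_add, map_add, map_add, map_add, eval_comp_of_mem_ker a hq2, add_zero,
    add_comm (eval a _)]
  refine Submodule.add_mem_sup ?_ ?_
  · have key : ∀ x ∈ Ideal.span (Set.range f), ∀ g,
        eval a (homogeneousComponent (s * (e + 1)) (g * x)) ∈ J * I ^ (s * e) := by
      intro x hx
      rw [mul_add, mul_one, add_comm (s * e) s]
      induction hx using Submodule.span_induction with
      | zero => simp
      | add x y _ _ hx hy =>
        intro g
        rw [mul_add g, map_add, map_add]
        exact add_mem (hx g) (hy g)
      | mem x hx =>
        obtain ⟨j, rfl⟩ := hx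
        intro g
        rw [mul_comm g, homogeneousComponent_mul_left (hf j), map_mul]
        exact Ideal.mul_mem_mul (Ideal.subset_span ⟨j, rfl⟩)
          (hev (homogeneousComponent_isHomogeneous _ _))
      | smul h x _ hx =>
        intro g
        rw [smul_eq_mul h, ← mul_assoc]
        exact hx _
    simpa using key q3 hq3 1
  · have key : ∀ x ∈ Ideal.map (C : R →+* MvPolynomial (Fin (n + 1)) R) M, ∀ g,
        eval a (homogeneousComponent (s * (e + 1)) (g * x)) ∈ M • I ^ (s * (e + 1)) := by
      intro x hx
      rw [Ideal.map] at hx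
      induction hx using Submodule.span_induction with
      | zero => simp
      | add x y _ _ hx hy =>
        intro g
        rw [mul_add g, map_add, map_add]
        exact add_mem (hx g) (hy g)
      | mem x hx =>
        obtain ⟨c, hc, rfl⟩ := hx
        intro g
        rw [mul_comm g, homogeneousComponent_C_mul, map_mul, eval_C]
        exact Ideal.mul_mem_mul hc (hev (homogeneousComponent_isHomogeneous _ _))
      | smul h x _ hx =>
        intro g
        rw [smul_eq_mul h, ← mul_assoc]
        exact hx _
    simpa using key q1 hq1 1

/-- The core existence result. -/
theorem core [IsDomain R] [IsNoetherianRing R] [IsLocalRing R] (d : ℕ) (hd : ringKrullDim R = d)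
    (I : Ideal R) (hI : I ≠ ⊥) (hIM : I ≤ IsLocalRing.maximalIdeal R) :
    ∃ s : ℕ, 1 ≤ s ∧ ∃ x : Fin d → R, (∀ i, x i ∈ I ^ s) ∧
      ∀ t : ℕ, 1 ≤ t → (Ideal.span (Set.range fun i => x i ^ t)).IsReductionOf (I ^ (s * t)) := by
  classical
  set M := IsLocalRing.maximalIdeal R with hM
  obtain ⟨c, hcI, hc0⟩ := Submodule.exists_mem_ne_zero_of_ne_bot hI
  obtain ⟨n, b, hb⟩ := Submodule.fg_iff_exists_fin_generating_family.1
    (IsNoetherian.noetherian I)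
  set a : Fin (n + 1) → R := Fin.cons c b with ha
  have haI : Ideal.span (Set.range a) = I := by
    rw [ha, Fin.range_cons, Ideal.span_insert]
    have : Ideal.span (Set.range b) = I := hb
    rw [this, sup_eq_right, Ideal.span_singleton_le_iff_mem]
    exact hcI
  have ha0 : a 0 ≠ 0 := by simpa [ha] using hc0
  set J := Ideal.map C M ⊔ RingHom.ker (psi a n) with hJ
  have hJh : Hom J := by
    refine Hom.sup (Hom.span ?_) (psi_hom a)
    rintro _ ⟨x, _, rfl⟩
    exact ⟨0, isHomogeneous_C _ _⟩
  have hJht : ∀ Q : Ideal (MvPolynomial (Fin (n + 1)) R), Q.IsPrime → J ≤ Q →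
      ((n + 1 : ℕ) : ℕ∞) ≤ Q.height := by
    intro Q hQ hle
    have : (RingHom.ker (psi a n)).IsPrime := RingHom.ker_isPrime _
    have hlt : RingHom.ker (psi a n) < Q := by
      refine lt_of_le_of_ne (le_sup_right.trans hle) ?_
      intro heq
      have h1 : C c ∈ Q := hle (Ideal.mem_sup_left (Ideal.mem_map_of_mem _ (hIM hcI)))
      rw [← heq, RingHom.mem_ker, algHom_C, algebraMap_eq] at h1
      exact hc0 (by simpa using h1)
    refine le_trans ?_ (Ideal.height_add_one_le_of_lt_of_isPrime hlt)
    push_cast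
    gcongr
    exact psi_height a ha0 n le_rfl
  obtain ⟨f, m, hfm, hf⟩ := params J hJh (n + 1) hJht d
  have hdim : ringKrullDim (MvPolynomial (Fin (n + 1)) R) = ((n + 1 + d : ℕ) : ℕ∞) := by
    rw [MvPolynomial.ringKrullDim_of_isNoetherianRing, hd]
    simp
    ring
  -- every homogeneous prime over the parameters contains the variables
  have hrad : ∀ i, X i ∈ (J ⊔ Ideal.span (Set.range f)).radical := by
    intro i
    rw [← Ideal.sInf_minimalPrimes, Submodule.mem_sInf]
    intro (Q : Ideal _) hQ
    by_contra hXi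
    have hQp : Q.IsPrime := hQ.1.1
    have hQh : Hom Q := Hom.minimalPrime (hJh.sup (Hom.span (by
      rintro _ ⟨j, rfl⟩; exact ⟨_, (hfm j).2⟩))) hQ
    have h1 := hf Q hQp hQ.1.2 ⟨i, hXi⟩
    set N : Ideal (MvPolynomial (Fin (n + 1)) R) := Ideal.comap constantCoeff M with hN
    have hNp : N.IsPrime := Ideal.comap_isPrime _ _
    have hlt : Q < N := by
      refine lt_of_le_of_ne ?_ ?_
      · intro p hp
        rw [hN, Ideal.mem_comap]
        by_contra hu
        have hu' : IsUnit (constantCoeff p) := by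
          simpa [hM] using hu
        have h0 := hQh p hp 0
        rw [homogeneousComponent_zero] at h0
        exact hQp.ne_top (Ideal.eq_top_of_isUnit_mem _ h0 (hu'.map C))
      · intro heq
        apply hXi
        rw [heq, hN, Ideal.mem_comap]
        simp
    have h2 := Ideal.height_add_one_le_of_lt_of_isPrime hlt
    have h3 : ((N.height : ℕ∞) : WithBot ℕ∞) ≤ ((n + 1 + d : ℕ) : ℕ∞) :=
      hdim ▸ Ideal.height_le_ringKrullDim_of_isPrime
    have h4 : N.height ≤ ((n + 1 + d : ℕ) : ℕ∞) := by exact_mod_cast h3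
    have h5 : ((n + 1 + d : ℕ) : ℕ∞) + 1 ≤ ((n + 1 + d : ℕ) : ℕ∞) :=
      (add_le_add_left h1 1).trans (h2.trans h4)
    have h6 : n + 1 + d + 1 ≤ n + 1 + d := by exact_mod_cast h5
    omega
  -- equalize degrees
  set s := ∏ j, m j with hs
  have hspos : 0 < s := Finset.prod_pos fun j _ => (hfm j).1
  set g : Fin d → MvPolynomial (Fin (n + 1)) R := fun j => f j ^ (s / m j) with hg
  have hdvd : ∀ j, m j ∣ s := fun j => Finset.dvd_prod_of_mem m (Finset.mem_univ j)
  have hgh : ∀ j, (g j).IsHomogeneous s := by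
    intro j
    have := (hfm j).2.pow (s / m j)
    rwa [Nat.mul_div_cancel' (hdvd j)] at this
  refine ⟨s, hspos, fun j => eval a (g j), ?_, ?_⟩
  · intro j
    rw [← haI]
    exact (Ideal.mem_span_pow_iff_exists_isHomogeneous a _).2 ⟨_, hgh j, rfl⟩
  · intro t ht
    have := final a (fun j => g j ^ t) (s * t) (by positivity) (fun j => (hgh j).pow t) (by
      intro i
      refine (?_ : (J ⊔ Ideal.span (Set.range f)).radical ≤ _) (hrad i)
      rw [Ideal.radical_le_radical_iff]
      refine sup_le (le_sup_left.trans Ideal.le_radical) ?_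
      rw [Ideal.span_le]
      rintro _ ⟨j, rfl⟩
      refine ⟨s / m j * t, Ideal.mem_sup_right (Ideal.subset_span ⟨j, ?_⟩)⟩
      simp only [hg, pow_mul])
    simpa [haI] using this

end rees
end ReductionAux

/-- Let `R` be a `d`-dimensional normal local domain (residue field possibly finite) and
`I` a normal `M`-primary ideal.  For every `r ≥ 1` there exist `s ≥ 1` and elements
`x₁, …, x_d ∈ I^{rs}` such that for every `t ≥ 1` the ideal `(x₁ᵗ, …, x_dᵗ)R` is a
reduction of `I^{rst}`. -/
theorem exists_reduction_of_powers_of_normal_primary_ideal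
    (R : Type*) [CommRing R] [IsDomain R] [IsNoetherianRing R] [IsIntegrallyClosed R]
    [IsLocalRing R] (d : ℕ) (hd : ringKrullDim R = d)
    (I : Ideal R) (hI : I ≠ ⊥) (hIn : I.IsNormalIdeal)
    (hIprim : I.radical = IsLocalRing.maximalIdeal R) :
    ∀ r : ℕ, 1 ≤ r →
      ∃ s : ℕ, 1 ≤ s ∧ ∃ x : Fin d → R, (∀ i, x i ∈ I ^ (r * s)) ∧
        ∀ t : ℕ, 1 ≤ t →
          (Ideal.span (Set.range fun i => x i ^ t)).IsReductionOf
            (I ^ (r * s * t)) := by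
  intro r hr
  have hIM : I ≤ IsLocalRing.maximalIdeal R := hIprim ▸ Ideal.le_radical
  obtain ⟨s, hs, x, hx, hred⟩ := ReductionAux.core d hd (I ^ r) (pow_ne_zero r hI)
    ((Ideal.pow_le_self (by omega)).trans hIM)
  refine ⟨s, hs, x, fun i => ?_, fun t ht => ?_⟩
  · rw [pow_mul]
    exact hx i
  · rw [mul_assoc, pow_mul]
    exact hred t ht
end

section
/- Let R be a normal noetherian domain and I a nonzero normal nonunit ideal. Then the extended Rees ring Ê = R[Z⁻¹, IZ] is a normal noetherian domain, and its localization at the multiplicative set {1, Z⁻¹, Z⁻², ...} equals R[Z, Z⁻¹]; consequently Ê = R[Z, Z⁻¹] ∩ W'₁ ∩ … ∩ W'_{h'} where W'ⱼ = Ê_{P'ⱼ} are the localizations at the (height one) minimal primes P'ⱼ of Z⁻¹Ê. -/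
/-- Divisibility from a stable ideal in a normal noetherian domain. -/
lemma dvd_of_stable_ideal {A : Type*} [CommRing A] [IsDomain A] [IsNoetherianRing A]
    [IsIntegrallyClosed A] {x g : A} (hx : x ≠ 0) (Q : Ideal A) (hQ : Q ≠ ⊥)
    (h : ∀ q ∈ Q, ∃ q' ∈ Q, g * q = x * q') : x ∣ g := by
  let K := FractionRing A
  have hx' : algebraMap A K x ≠ 0 := by simpa using hx
  let u : K := algebraMap A K g / algebraMap A K x
  obtain ⟨q, hq, hq0⟩ := Submodule.exists_mem_ne_zero_of_ne_bot hQ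
  have key : ∀ n : ℕ, ∃ q' ∈ Q, algebraMap A K q' = q • u ^ n := by
    intro n
    induction n with
    | zero => exact ⟨q, hq, by simp [Algebra.smul_def]⟩
    | succ n ih =>
      obtain ⟨q', hq', e⟩ := ih
      obtain ⟨q'', hq'', e'⟩ := h q' hq'
      refine ⟨q'', hq'', ?_⟩
      rw [pow_succ, ← smul_mul_assoc, ← e]
      have := congrArg (algebraMap A K) e'
      simp only [map_mul] at this
      simp only [u]
      rw [← mul_div_assoc, eq_div_iff hx', mul_comm, ← this, mul_comm]
  have hu : IsIntegral A u := by
    refine IsAlmostIntegral.isIntegral ⟨q, mem_nonZeroDivisors_of_ne_zero hq0, fun n => ?_⟩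
    obtain ⟨q', _, e⟩ := key n
    exact ⟨q', e⟩
  obtain ⟨y, hy⟩ := IsIntegrallyClosed.isIntegral_iff.mp hu
  refine ⟨y, ?_⟩
  apply IsFractionRing.injective A K
  rw [map_mul, hy]
  exact (mul_div_cancel₀ _ hx').symm

lemma dvd_of_minimalPrimes {A : Type*} [CommRing A] [IsDomain A] [IsNoetherianRing A]
    [IsIntegrallyClosed A] {z g : A} (hz : z ≠ 0) (n : ℕ)
    (h : ∀ P ∈ (Ideal.span {z} : Ideal A).minimalPrimes, ∃ b, b ∉ P ∧ z ^ n ∣ g * b) :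
    z ^ n ∣ g := by
  by_contra hg
  set x := z ^ n with hxdef
  have hx : x ≠ 0 := pow_ne_zero _ hz
  let M := A ⧸ (Ideal.span {x} : Ideal A)
  have hmk : ∀ y : A, (Ideal.Quotient.mk (Ideal.span {x}) y : M) = 0 ↔ x ∣ y := fun y => by
    rw [Ideal.Quotient.eq_zero_iff_mem, Ideal.mem_span_singleton]
  obtain ⟨P, hP, hle⟩ := exists_le_isAssociatedPrime_of_isNoetherianRing A
    (Ideal.Quotient.mk (Ideal.span {x}) g : M) (by rwa [Ne, hmk])
  rw [isAssociatedPrime_iff] at hP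
  obtain ⟨hPp, y, hy⟩ := hP
  obtain ⟨y, rfl⟩ := Ideal.Quotient.mk_surjective y
  have hcol : ∀ w t : A, t ∈ (⊥ : Submodule A M).colon {(Ideal.Quotient.mk (Ideal.span {x}) w : M)}
      ↔ x ∣ w * t := by
    intro w t
    rw [Submodule.mem_colon_singleton, Submodule.mem_bot, ← hmk, mul_comm, map_mul]
    rfl
  have hPy : ∀ t, t ∈ P ↔ x ∣ y * t := fun t => by rw [hy, hcol]
  have hyx : ¬ x ∣ y := fun hd => hPp.ne_top ((Ideal.eq_top_iff_one _).2 ((hPy 1).2 (by simpa)))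
  have hzP : z ∈ P := hPp.mem_of_pow_mem n ((hPy _).2 (Dvd.intro_left _ rfl))
  obtain ⟨Q, hQ, hQP⟩ := Ideal.exists_minimalPrimes_le
    (show (Ideal.span {z} : Ideal A) ≤ P by rwa [Ideal.span_singleton_le_iff_mem])
  have hQp : Q.IsPrime := hQ.1.1
  have hzQ : z ∈ Q := hQ.1.2 (Ideal.mem_span_singleton_self z)
  have hQ0 : Q ≠ ⊥ := fun e => hz (by simpa [e] using hzQ)
  have hP0 : P ≠ ⊥ := fun e => hz (by simpa [e] using hzP)
  have hPQ : P ≤ Q := by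
    by_contra hPQ
    by_cases hs : ∀ p ∈ P, ∃ s ∈ P, y * p = x * s
    · exact hyx (dvd_of_stable_ideal hx P hP0 hs)
    push Not at hs
    obtain ⟨p, hp, hps⟩ := hs
    obtain ⟨s, hs⟩ := (hPy p).1 hp
    have hsP : s ∉ P := fun h' => hps s h' hs
    have hrel : ∀ q t, y * q = x * t → q * s = p * t := by
      intro q t e
      apply mul_left_cancel₀ hx
      linear_combination (-q) * hs + p * e
    by_cases hpQ : p ∈ Q
    · apply hPQ
      intro t ht
      obtain ⟨t', e⟩ := (hPy t).1 ht
      have := hrel t t' e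
      have h2 : t * s ∈ Q := this ▸ Q.mul_mem_right _ hpQ
      exact (hQp.mem_or_mem h2).resolve_right fun h' => hsP (hQP h')
    · refine hyx (dvd_of_stable_ideal hx Q hQ0 fun q hq => ?_)
      obtain ⟨t, e⟩ := (hPy q).1 (hQP hq)
      refine ⟨t, ?_, e⟩
      have h2 : p * t ∈ Q := hrel q t e ▸ Q.mul_mem_right _ hq
      exact (hQp.mem_or_mem h2).resolve_left hpQ
  obtain ⟨b, hb, hd⟩ := h Q hQ
  exact hb (hPQ (hle ((hcol _ _).2 hd)))

open Polynomial in
lemma mem_of_almost_integral {R : Type*} [CommRing R] [IsDomain R] [IsNoetherianRing R]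
    (J : Ideal R) (hJ : J.IsIntegrallyClosedIdeal) (γ r : R) (hγ : γ ≠ 0)
    (h : ∀ m : ℕ, γ * r ^ m ∈ J ^ m) : r ∈ J := by
  have hint : IsIntegral (reesAlgebra J) (monomial 1 r : R[X]) := by
    refine IsAlmostIntegral.isIntegral ⟨⟨C γ, (reesAlgebra J).algebraMap_mem γ⟩, ?_, fun m => ?_⟩
    · apply mem_nonZeroDivisors_of_ne_zero
      intro e
      exact hγ (by simpa using congrArg Subtype.val e)
    · refine ⟨⟨monomial m (γ * r ^ m), reesAlgebra.monomial_mem.2 (h m)⟩, ?_⟩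
      rw [Algebra.smul_def]
      change monomial m (γ * r ^ m) = C γ * monomial 1 r ^ m
      rw [monomial_pow, C_mul_monomial, one_mul]
  obtain ⟨p, hp, hp0⟩ := hint
  set n := p.natDegree with hn
  have hn0 : 0 < n := by
    rcases Nat.eq_zero_or_pos n with h0 | h0
    · rw [(Polynomial.Monic.natDegree_eq_zero hp).1 h0] at hp0
      simp at hp0
    · exact h0
  refine hJ r ⟨n, hn0, fun i => (p.coeff (n - i)).1.coeff i, fun i _ _ => (p.coeff (n - i)).2 i, ?_⟩
  rw [eval₂_eq_sum_range, Finset.sum_range_succ, ← hn, hp.coeff_natDegree] at hp0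
  have := congrArg (fun q => coeff q n) hp0
  simp only [map_one, one_mul, coeff_add, finsetSum_coeff, coeff_zero, monomial_pow,
    coeff_monomial] at this
  rw [if_pos trivial, add_comm] at this
  rw [← this]
  congr 1
  refine Finset.sum_nbij' (fun i => n - i) (fun i => n - i) ?_ ?_ ?_ ?_ ?_
  · intro i hi
    simp only [Finset.mem_Icc, Finset.mem_range] at *
    omega
  · intro i hi
    simp only [Finset.mem_Icc, Finset.mem_range] at *
    omega
  · intro i hi
    simp only [Finset.mem_Icc] at *
    omega
  · intro i hi
    simp only [Finset.mem_range] at *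
    omega
  · intro i hi
    simp only [Finset.mem_Icc] at *
    change _ = coeff ((p.coeff (n - i)).1 * monomial (n - i) (r ^ (n - i))) n
    have e := coeff_mul_monomial (p.coeff (n - i)).1 (n - i) i (r ^ (n - i))
    rw [show i + (n - i) = n by omega] at e
    exact e.symm

open LaurentPolynomial

/-- The extended Rees ring. -/
noncomputable abbrev extRees {R : Type*} [CommRing R] (I : Ideal R) :
    Subalgebra R (LaurentPolynomial R) :=
  Algebra.adjoin R ({(T (-1) : LaurentPolynomial R)} ∪
    (fun a : R => algebraMap R (LaurentPolynomial R) a * T 1) '' ↑I)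

def gradedRees {R : Type*} [CommRing R] (I : Ideal R) : Subalgebra R (LaurentPolynomial R) where
  carrier := {f | ∀ n : ℤ, f.coeff n ∈ I ^ n.toNat}
  mul_mem' := by
    intro f g hf hg n
    classical
    rw [AddMonoidAlgebra.coeff_mul]
    refine Submodule.sum_mem _ fun a _ => Submodule.sum_mem _ fun b _ => ?_
    dsimp only
    split_ifs with h
    · have h1 : f.coeff a * g.coeff b ∈ I ^ (a.toNat + b.toNat) := by
        rw [pow_add]; exact Ideal.mul_mem_mul (hf a) (hg b)
      exact Ideal.pow_le_pow_right (by omega) h1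
    · exact zero_mem _
  add_mem' := by
    intro f g hf hg n
    exact add_mem (hf n) (hg n)
  algebraMap_mem' := by
    intro r n
    rw [← C_eq_algebraMap, C_apply]
    split_ifs with h
    · simp [h]
    · exact zero_mem _

lemma monomial_mem_extRees {R : Type*} [CommRing R] (I : Ideal R) (n : ℕ) (a : R)
    (ha : a ∈ I ^ n) : C a * T (n : ℤ) ∈ extRees I := by
  induction n generalizing a with
  | zero =>
    rw [Nat.cast_zero, T_zero, mul_one, C_eq_algebraMap]
    exact (extRees I).algebraMap_mem a
  | succ n ih =>
    rw [pow_succ] at ha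
    refine Submodule.mul_induction_on ha (fun x hx y hy => ?_) fun x y hx hy => ?_
    · have h1 := ih x hx
      have h2 : C y * T 1 ∈ extRees I :=
        Algebra.subset_adjoin (Or.inr ⟨y, hy, by rw [C_eq_algebraMap]⟩)
      have := mul_mem h1 h2
      convert this using 1
      rw [Nat.cast_succ, T_add, map_mul]; ring
    · rw [map_add, add_mul]; exact add_mem hx hy

lemma T_neg_mem_extRees {R : Type*} [CommRing R] (I : Ideal R) (n : ℕ) :
    T (-(n : ℤ)) ∈ extRees I := by
  have h : (T (-1) : LaurentPolynomial R) ∈ extRees I := Algebra.subset_adjoin (Or.inl rfl)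
  have := pow_mem h n
  rwa [T_pow, mul_neg_one] at this

lemma monomial_mem_extRees' {R : Type*} [CommRing R] (I : Ideal R) (n : ℤ) (a : R)
    (ha : a ∈ I ^ n.toNat) : C a * T n ∈ extRees I := by
  rcases le_total 0 n with h | h
  · lift n to ℕ using h
    exact monomial_mem_extRees I n a (by simpa using ha)
  · obtain ⟨m, rfl⟩ : ∃ m : ℕ, n = -(m : ℤ) := ⟨(-n).toNat, by omega⟩
    exact mul_mem ((extRees I).algebraMap_mem a) (T_neg_mem_extRees I m)

lemma extRees_eq {R : Type*} [CommRing R] (I : Ideal R) : extRees I = gradedRees I := by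
  classical
  apply le_antisymm
  · apply Algebra.adjoin_le
    rintro f (rfl | ⟨a, ha, rfl⟩) n
    · rw [T_apply]
      split_ifs with h
      · subst h; simp
      · exact zero_mem _
    · dsimp only
      rw [← C_eq_algebraMap, ← single_eq_C_mul_T, AddMonoidAlgebra.coeff_single,
        Finsupp.single_apply]
      split_ifs with h
      · subst h; simpa using ha
      · exact zero_mem _
  · intro f hf
    have : f = ∑ n ∈ f.coeff.support, C (f.coeff n) * T n := by
      conv_lhs => rw [← AddMonoidAlgebra.sum_coeff_single f]
      simp only [← single_eq_C_mul_T]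
      rfl
    rw [this]
    exact sum_mem fun n _ => monomial_mem_extRees' I n _ (hf n)

lemma mem_extRees {R : Type*} [CommRing R] (I : Ideal R) (f : LaurentPolynomial R) :
    f ∈ extRees I ↔ ∀ n : ℤ, f.coeff n ∈ I ^ n.toNat := by
  rw [extRees_eq]; rfl

lemma extRees_clear {R : Type*} [CommRing R] (I : Ideal R) (f : LaurentPolynomial R) :
    ∃ n : ℕ, (T (-1) : LaurentPolynomial R) ^ n * f ∈ extRees I := by
  induction f using LaurentPolynomial.induction_on' with
  | add p q hp hq =>
    obtain ⟨m, hm⟩ := hp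
    obtain ⟨n, hn⟩ := hq
    have h : (T (-1) : LaurentPolynomial R) ∈ extRees I := Algebra.subset_adjoin (Or.inl rfl)
    refine ⟨m + n, ?_⟩
    have := add_mem (mul_mem (pow_mem h n) hm) (mul_mem (pow_mem h m) hn)
    convert this using 1
    ring
  | C_mul_T n a =>
    refine ⟨n.toNat, ?_⟩
    rw [T_pow, mul_left_comm, ← T_add]
    apply monomial_mem_extRees'
    rw [show (n.toNat * -1 + n : ℤ).toNat = 0 by omega]
    simp

lemma extRees_noeth {R : Type*} [CommRing R] [IsNoetherianRing R] (I : Ideal R) :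
    IsNoetherianRing (extRees I) := by
  classical
  obtain ⟨s, hs⟩ := IsNoetherian.noetherian I
  have key : extRees I = Algebra.adjoin R (({(T (-1) : LaurentPolynomial R)} ∪
      s.image (fun a : R => algebraMap R (LaurentPolynomial R) a * T 1) : Finset _) :
      Set (LaurentPolynomial R)) := by
    apply le_antisymm
    · apply Algebra.adjoin_le
      rintro f (rfl | ⟨a, ha, rfl⟩)
      · exact Algebra.subset_adjoin (by simp)
      · rw [← hs] at ha
        dsimp only
        refine Submodule.span_induction ?_ ?_ ?_ ?_ ha
        · intro x hx
          apply Algebra.subset_adjoin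
          rw [Finset.coe_union, Finset.coe_image]
          exact Or.inr ⟨x, hx, rfl⟩
        · simp
        · intro x y _ _ hx hy
          rw [map_add, add_mul]; exact add_mem hx hy
        · intro a x _ hx
          rw [smul_eq_mul, map_mul, mul_assoc]
          exact mul_mem (Subalgebra.algebraMap_mem _ a) hx
    · apply Algebra.adjoin_mono
      rw [Finset.coe_union, Finset.coe_image, Finset.coe_singleton]
      apply Set.union_subset_union_right
      apply Set.image_mono
      rw [← hs]
      exact Submodule.subset_span
  have fg : (extRees I).FG := ⟨_, key.symm⟩
  have : Algebra.FiniteType R (extRees I) := ⟨(extRees I).fg_top.mpr fg⟩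
  exact Algebra.FiniteType.isNoetherianRing R _

/-- `f` has degree at most `d`, with coefficient `c` there. -/
def Lead {R : Type*} [CommRing R] (f : LaurentPolynomial R) (d : ℤ) (c : R) : Prop :=
  f.coeff d = c ∧ ∀ n, d < n → f.coeff n = 0

lemma Lead.mul {R : Type*} [CommRing R] {f g : LaurentPolynomial R} {d e : ℤ} {a b : R}
    (hf : Lead f d a) (hg : Lead g e b) : Lead (f * g) (d + e) (a * b) := by
  classical
  have hf' : ∀ n ∈ f.coeff.support, n ≤ d := fun n hn => by
    by_contra h
    exact (Finsupp.mem_support_iff.1 hn) (hf.2 n (by omega))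
  have hg' : ∀ n ∈ g.coeff.support, n ≤ e := fun n hn => by
    by_contra h
    exact (Finsupp.mem_support_iff.1 hn) (hg.2 n (by omega))
  refine ⟨?_, fun n hn => ?_⟩
  · rw [AddMonoidAlgebra.coeff_mul_add_of_uniqueAdd, hf.1, hg.1]
    intro x y hx hy h
    have := hf' x hx
    have := hg' y hy
    omega
  · rw [AddMonoidAlgebra.coeff_mul]
    refine Finset.sum_eq_zero fun x hx => Finset.sum_eq_zero fun y hy => if_neg ?_
    have := hf' x hx
    have := hg' y hy
    omega

lemma Lead.pow {R : Type*} [CommRing R] {f : LaurentPolynomial R} {d : ℤ} {a : R}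
    (hf : Lead f d a) (m : ℕ) : Lead (f ^ m) (m * d) (a ^ m) := by
  induction m with
  | zero =>
    refine ⟨?_, fun n hn => ?_⟩
    · rw [pow_zero, pow_zero, ← T_zero, T_apply]; simp
    · rw [pow_zero, ← T_zero, T_apply, if_neg]
      intro h; subst h; simp at hn
  | succ m ih =>
    have := ih.mul hf
    rw [pow_succ, pow_succ]
    convert this using 1
    push_cast; ring

lemma exists_lead {R : Type*} [CommRing R] (f : LaurentPolynomial R) (hf : f ≠ 0) :
    ∃ d c, c ≠ 0 ∧ Lead f d c := by
  have hs : f.coeff.support.Nonempty := by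
    rw [Finsupp.support_nonempty_iff]
    simpa using hf
  refine ⟨f.coeff.support.max' hs, _, ?_, rfl, fun n hn => ?_⟩
  · exact Finsupp.mem_support_iff.1 (Finset.max'_mem _ hs)
  · by_contra h
    exact absurd (Finset.le_max' _ n (Finsupp.mem_support_iff.2 h)) (by omega)

lemma lead_mem {R : Type*} [CommRing R] [IsDomain R] [IsNoetherianRing R]
    (I : Ideal R) (hI : I ≠ ⊥) (hIn : I.IsNormalIdeal) (f : LaurentPolynomial R)
    (hf : IsAlmostIntegral (extRees I) f) (d : ℤ) (r : R) (hd : Lead f d r) :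
    r ∈ I ^ d.toNat := by
  rcases le_or_gt d 0 with h | h
  · simp [Int.toNat_of_nonpos h]
  obtain ⟨D, rfl⟩ : ∃ D : ℕ, d = D := ⟨d.toNat, by omega⟩
  obtain ⟨c, hc, hcf⟩ := hf
  have hc0 : (c : LaurentPolynomial R) ≠ 0 := by
    simpa using nonZeroDivisors.ne_zero hc
  obtain ⟨e, γ, hγ, hl⟩ := exists_lead _ hc0
  obtain ⟨a, ha, ha0⟩ := Submodule.exists_mem_ne_zero_of_ne_bot hI
  rw [Int.toNat_natCast]
  refine mem_of_almost_integral (I ^ D) (hIn D (by omega)) (a ^ (-e).toNat * γ) r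
    (mul_ne_zero (pow_ne_zero _ ha0) hγ) fun m => ?_
  obtain ⟨y, hy⟩ := hcf m
  have hy' : (c : LaurentPolynomial R) * f ^ m ∈ extRees I := by
    have : (c : LaurentPolynomial R) * f ^ m = y := hy.symm
    rw [this]; exact y.2
  have h1 := (mem_extRees I _).1 hy' (e + m * D)
  rw [(hl.mul (hd.pow m)).1] at h1
  have h2 := Ideal.mul_mem_mul (Ideal.pow_mem_pow ha (-e).toNat) h1
  rw [← pow_add, ← mul_assoc] at h2
  rw [← pow_mul]
  refine Ideal.pow_le_pow_right ?_ h2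
  have : ((D * m : ℕ) : ℤ) = m * D := by push_cast; ring
  omega

lemma integral_mem {R : Type*} [CommRing R] [IsDomain R] [IsNoetherianRing R]
    (I : Ideal R) (hI : I ≠ ⊥) (hIn : I.IsNormalIdeal) (k : ℕ) :
    ∀ (f : LaurentPolynomial R), f.coeff.support.card ≤ k →
    f ∈ completeIntegralClosure (extRees I) (LaurentPolynomial R) → f ∈ extRees I := by
  induction k with
  | zero =>
    intro f hk hf
    have : f = 0 := by simpa using hk
    rw [this]; exact zero_mem _
  | succ k ih =>
    intro f hk hf
    by_cases h0 : f = 0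
    · rw [h0]; exact zero_mem _
    obtain ⟨d, r, hr, hd⟩ := exists_lead f h0
    have ht : C r * T d ∈ extRees I :=
      monomial_mem_extRees' I d r (lead_mem I hI hIn f hf d r hd)
    have hg : f - C r * T d ∈ extRees I := by
      apply ih
      · have hsub : (f - C r * T d).coeff.support ⊆ f.coeff.support.erase d := by
          intro n hn
          rw [Finsupp.mem_support_iff, ← single_eq_C_mul_T, AddMonoidAlgebra.coeff_sub,
            AddMonoidAlgebra.coeff_single, Finsupp.sub_apply, Finsupp.single_apply] at hn
          rw [Finset.mem_erase, Finsupp.mem_support_iff]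
          by_cases e : d = n
          · subst e
            simp [hd.1] at hn
          · rw [if_neg e, sub_zero] at hn
            exact ⟨fun h => e h.symm, hn⟩
        have := Finset.card_le_card hsub
        rw [Finset.card_erase_of_mem (Finsupp.mem_support_iff.2 (by rwa [hd.1]))] at this
        omega
      · exact sub_mem hf (Subalgebra.algebraMap_mem _ (⟨_, ht⟩ : extRees I))
    have := add_mem hg ht
    rwa [sub_add_cancel] at this

lemma extRees_closed {R : Type*} [CommRing R] [IsDomain R] [IsNoetherianRing R]
    [IsIntegrallyClosed R]
    (I : Ideal R) (hI : I ≠ ⊥) (hIn : I.IsNormalIdeal) : IsIntegrallyClosed (extRees I) := by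
  have : IsDomain (LaurentPolynomial R) := inferInstance
  have : IsIntegrallyClosed (LaurentPolynomial R) :=
    isIntegrallyClosed_of_isLocalization _ (Submonoid.powers (Polynomial.X : Polynomial R))
      (powers_le_nonZeroDivisors_of_noZeroDivisors Polynomial.X_ne_zero)
  have : IsIntegrallyClosedIn (extRees I) (LaurentPolynomial R) := by
    rw [isIntegrallyClosedIn_iff]
    refine ⟨Subtype.val_injective, fun {f} hf => ?_⟩
    obtain ⟨n, hn⟩ := extRees_clear I f
    have h : (T (-1) : LaurentPolynomial R) ∈ extRees I := Algebra.subset_adjoin (Or.inl rfl)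
    have hz : (⟨_, h⟩ : extRees I) ≠ 0 := by
      intro e
      exact (isUnit_T (R := R) (-1)).ne_zero (congrArg Subtype.val e)
    have := hf.isAlmostIntegral_of_exists_smul_mem_range
      ⟨(⟨_, h⟩ : extRees I) ^ n, mem_nonZeroDivisors_of_ne_zero (pow_ne_zero _ hz), ⟨_, hn⟩, rfl⟩
    exact ⟨⟨f, integral_mem I hI hIn _ f le_rfl this⟩, rfl⟩
  exact .of_isIntegrallyClosed_of_isIntegrallyClosedIn _ (LaurentPolynomial R)

/-- Let `R` be a normal noetherian domain and `I` a nonzero normal nonunit ideal.  Then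
the extended Rees ring `Ê = R[Z⁻¹, IZ] ⊆ R[Z, Z⁻¹]` is a normal noetherian domain; its
localization at `{1, Z⁻¹, Z⁻², …}` equals `R[Z, Z⁻¹]` (every Laurent polynomial becomes
an element of `Ê` after multiplication by a power of `Z⁻¹`); and
`Ê = R[Z, Z⁻¹] ∩ W'₁ ∩ ⋯ ∩ W'_{h'}` where the `W'ⱼ = Ê_{P'ⱼ}` are the localizations of
`Ê` at the minimal primes `P'ⱼ` of `Z⁻¹Ê`. -/
theorem extended_rees_ring_normal_noetherian_and_intersection
    (R : Type*) [CommRing R] [IsDomain R] [IsNoetherianRing R] [IsIntegrallyClosed R]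
    (I : Ideal R) (hI : I ≠ ⊥) (hItop : I ≠ ⊤) (hIn : I.IsNormalIdeal) :
    let Z : LaurentPolynomial R := LaurentPolynomial.T 1
    let Zinv : LaurentPolynomial R := LaurentPolynomial.T (-1)
    let Ehat : Subalgebra R (LaurentPolynomial R) :=
      Algebra.adjoin R
        ({Zinv} ∪ (fun a : R => algebraMap R (LaurentPolynomial R) a * Z) '' ↑I)
    let zinv : ↥Ehat := ⟨Zinv, Algebra.subset_adjoin (Set.mem_union_left _ rfl)⟩
    -- `Ê` is a normal noetherian domain:
    IsDomain ↥Ehat ∧ IsNoetherianRing ↥Ehat ∧ IsIntegrallyClosed ↥Ehat ∧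
    -- `Ê` localized at the powers of `Z⁻¹` is all of `R[Z, Z⁻¹]`:
    (∀ f : LaurentPolynomial R, ∃ n : ℕ, Zinv ^ n * f ∈ Ehat) ∧
    -- `Ê = R[Z, Z⁻¹] ∩ ⋂ⱼ Ê_{P'ⱼ}`, the intersection over the minimal primes of `Z⁻¹Ê`:
    (∀ f : LaurentPolynomial R,
      f ∈ Ehat ↔
        ∀ P ∈ (Ideal.span {zinv} : Ideal ↥Ehat).minimalPrimes,
          ∃ a b : ↥Ehat, b ∉ P ∧ f * ↑b = ↑a) := by

  intro Z Zinv Ehat zinv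
  have hE : Ehat = extRees I := rfl
  have i1 : IsDomain Ehat := inferInstance
  have i2 : IsNoetherianRing Ehat := extRees_noeth I
  have i3 : IsIntegrallyClosed Ehat := extRees_closed I hI hIn
  refine ⟨i1, i2, i3, extRees_clear I, fun f => ⟨fun hf P hP => ?_, fun h => ?_⟩⟩
  · refine ⟨⟨f, hf⟩, 1, ?_, by simp⟩
    exact (Ideal.ne_top_iff_one P).1 hP.1.1.ne_top
  · obtain ⟨n, hn⟩ := extRees_clear I f
    have hz : zinv ≠ 0 := by
      intro e
      exact (isUnit_T (R := R) (-1)).ne_zero (congrArg Subtype.val e)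
    have hd : zinv ^ n ∣ (⟨_, hn⟩ : Ehat) := by
      apply dvd_of_minimalPrimes hz n
      intro P hP
      obtain ⟨a, b, hb, e⟩ := h P hP
      refine ⟨b, hb, a, Subtype.ext ?_⟩
      change Zinv ^ n * f * b = Zinv ^ n * a
      rw [mul_assoc, e]
    obtain ⟨y, hy⟩ := hd
    have hy' : Zinv ^ n * f = Zinv ^ n * y := congrArg Subtype.val hy
    have hu : IsUnit (Zinv ^ n) := (isUnit_T (R := R) (-1)).pow n
    rw [hu.mul_right_inj] at hy'
    rw [hy']
    exact y.2
end

section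
/- Let K be a field, m > n > 0 integers with m not divisible by char K, and f₁,…,fₙ pairwise coprime homogeneous linear forms in K[X,Y]. Then g = Zᵐ − f₁(X,Y)⋯fₙ(X,Y) is irreducible in K[X,Y,Z]. -/
theorem aux_irreducible_linear {K : Type*} [Field K] {p : MvPolynomial (Fin 2) K}
    (h : p.IsHomogeneous 1) (h0 : p ≠ 0) : Irreducible p := by
  have hd := h.totalDegree h0
  constructor
  · intro hu
    rw [MvPolynomial.isUnit_iff_totalDegree_of_isReduced] at hu
    omega
  · intro a b hab
    subst hab
    have ha : a ≠ 0 := left_ne_zero_of_mul h0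
    have hb : b ≠ 0 := right_ne_zero_of_mul h0
    rw [MvPolynomial.totalDegree_mul_of_isDomain ha hb] at hd
    have key : ∀ c : MvPolynomial (Fin 2) K, c ≠ 0 → c.totalDegree = 0 → IsUnit c := by
      intro c hc hc0
      rw [MvPolynomial.totalDegree_eq_zero_iff_eq_C] at hc0
      rw [hc0] at hc ⊢
      refine IsUnit.map MvPolynomial.C (isUnit_iff_ne_zero.mpr ?_)
      intro h; rw [h] at hc; simp at hc
    rcases Nat.eq_zero_or_pos a.totalDegree with h | h
    · exact Or.inl (key a ha h)
    · exact Or.inr (key b hb (by omega))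

theorem aux_irreducible_poly {K : Type*} [Field K] (m n : ℕ) (hn : 0 < n) (hm : 0 < m)
    (f : Fin n → MvPolynomial (Fin 2) K) (hirr : ∀ i, Irreducible (f i))
    (hcop : ∀ i j, i ≠ j → ¬ Associated (f i) (f j)) :
    Irreducible (Polynomial.X ^ m - Polynomial.C (∏ i, f i)) := by
  let i₀ : Fin n := ⟨0, hn⟩
  have hp : Prime (f i₀) := (hirr i₀).prime
  have hmon := Polynomial.monic_X_pow_sub_C (∏ i, f i) hm.ne'
  have hsplit : ∏ i, f i = f i₀ * ∏ i ∈ Finset.univ.erase i₀, f i :=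
    (Finset.mul_prod_erase _ _ (Finset.mem_univ _)).symm
  have hdeg : (Polynomial.X ^ m - Polynomial.C (∏ i, f i)).natDegree = m :=
    Polynomial.natDegree_X_pow_sub_C
  have hE : (Polynomial.X ^ m - Polynomial.C (∏ i, f i)).IsEisensteinAt
      (Ideal.span {f i₀}) := by
    have hpI : (Ideal.span {f i₀}).IsPrime := (Ideal.span_singleton_prime hp.ne_zero).mpr hp
    refine ⟨?_, ?_, ?_⟩
    · rw [hmon.leadingCoeff]
      exact fun h => hpI.ne_top ((Ideal.eq_top_iff_one _).mpr h)
    · intro k hk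
      rw [hdeg] at hk
      rw [Polynomial.coeff_sub, Polynomial.coeff_X_pow, if_neg hk.ne, zero_sub, neg_mem_iff,
        Polynomial.coeff_C]
      split_ifs
      · rw [hsplit, Ideal.mem_span_singleton]
        exact dvd_mul_right _ _
      · exact zero_mem _
    · rw [Polynomial.coeff_sub, Polynomial.coeff_X_pow, if_neg hm.ne, zero_sub, neg_mem_iff,
        Polynomial.coeff_C_zero, hsplit, Ideal.span_singleton_pow, Ideal.mem_span_singleton, sq,
        mul_dvd_mul_iff_left hp.ne_zero, hp.dvd_finsetProd_iff]
      rintro ⟨j, hj, hd⟩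
      exact hcop i₀ j (Finset.ne_of_mem_erase hj).symm ((hirr i₀).associated_of_dvd (hirr j) hd)
  exact hE.irreducible ((Ideal.span_singleton_prime hp.ne_zero).mpr hp) hmon.isPrimitive
    (by rw [hdeg]; exact hm)


/-- Let `K` be a field, `m > n > 0` integers with `char K ∤ m`, and `f₁, …, fₙ` pairwise
coprime (i.e. pairwise non-associated) homogeneous linear forms in `K[X,Y]`.  Then
`g = Zᵐ − f₁(X,Y) ⋯ fₙ(X,Y)` is irreducible in `K[X,Y,Z]`. -/
theorem irreducible_pow_sub_product_of_linear_forms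
    (K : Type*) [Field K] (m n : ℕ) (hn : 0 < n) (hmn : n < m)
    (hchar : ¬ (ringChar K ∣ m))
    (f : Fin n → MvPolynomial (Fin 2) K)
    (hhom : ∀ i, (f i).IsHomogeneous 1)
    (hne : ∀ i, f i ≠ 0)
    (hcop : ∀ i j, i ≠ j → ¬ Associated (f i) (f j)) :
    Irreducible
      ((MvPolynomial.X (2 : Fin 3)) ^ m -
        ∏ i, MvPolynomial.rename (Fin.castSucc : Fin 2 → Fin 3) (f i)) := by

  let φ := (MvPolynomial.renameEquiv K (finSuccEquivLast (n := 2))).trans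
    (MvPolynomial.optionEquivLeft K (Fin 2))
  have hC : ∀ p : MvPolynomial (Fin 2) K,
      φ (MvPolynomial.rename (Fin.castSucc : Fin 2 → Fin 3) p) = Polynomial.C p := by
    intro p
    induction p using MvPolynomial.induction_on with
    | C a => simp [φ, MvPolynomial.optionEquivLeft_C]
    | add p q hp hq => rw [map_add, map_add, hp, hq, map_add]
    | mul_X p i hp =>
      rw [map_mul, map_mul, hp, map_mul]
      simp [φ, MvPolynomial.optionEquivLeft_X_some]
  have hX : φ (MvPolynomial.X (2 : Fin 3)) = Polynomial.X := by
    have h2 : finSuccEquivLast (2 : Fin 3) = none := finSuccEquivLast_last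
    simp [φ, h2, MvPolynomial.optionEquivLeft_X_none]
  rw [← MulEquiv.irreducible_iff φ, map_sub, map_pow, hX, map_prod]
  simp only [hC]
  rw [← map_prod]
  exact aux_irreducible_poly m n hn (by omega) f
    (fun i => aux_irreducible_linear (hhom i) (hne i)) hcop
end
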